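/- Let α, β be real numbers with −|a| < α < β < |a|. Then lim_{n→∞} Σ_{y ∈ ℤ, α ≤ y/n ≤ β} p_n(φ; y) = ∫_α^β ρ(ξ) dξ, where ρ(ξ) = |b|(1 + λ_A(φ)ξ)/(π(1 − ξ²)√(|a|² − ξ²)). -/

import Mathlib

/-!
The proof goes through weak convergence of the law of `X_n / n`, where `X_n` has distribution
`p_n(φ; ·)`.

The gauge transformation `f(x) ↦ (a/|a|)^x f(x)` changes neither the probabilities nor `λ_A(φ)`, so
the upper left entry of the coin may be taken to be a real number `r = |a|` in `(0, 1)`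
(`qwP_gauge`, `lamA_gauge`). Fourier transformation turns the walk into multiplication by a matrix of
determinant one and trace `2 r cos t`, that is, by `cos μ + i sin μ H` with `cos μ(t) = r cos t` and
`H(t)` a Hermitian involution. Hence the transformed state at time `n` is
`cos (nμ) φ + i sin (nμ) Hφ` (`fser_iter`).

By Parseval's identity the characteristic function of `X_n / n` at `ξ` is the mean over `t` of the
inner product of the transformed state at `t` and at `t + ξ/n` (`integral_corr`). With the group
velocity `v = μ'`, these inner products tend to `cos (ξv) + i ⟨φ, Hφ⟩ sin (ξv)` (`tendsto_corr`), and
dominated convergence applies. The symmetries `t ↦ -t` and `t ↦ t + π` rewrite the limit as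
`π⁻¹ ∫ (1 + λ_A(φ) v) e^{iξv} dt` over `[-π/2, π/2]` (`integral_limit`), the characteristic function
of an image measure under `v` (`limM`).

Lévy's continuity theorem gives weak convergence. Since `v` is strictly increasing on
`[-π/2, π/2]`, the limit law has no atoms, so the portmanteau theorem gives convergence of the
probabilities of `[α, β]`. The substitution `ξ = v(t)` identifies the limit with `∫ ρ`
(`integral_vel`, `limM_Icc`).
-/

open Filter Topology Asymptotics MeasureTheory

noncomputable section

/-- One step of the (column-decomposition) quantum walk `U` on functions `ℤ → ℂ²`:
`(Uf)(x) = P f(x+1) + Q f(x-1)` with `P = [[a,0],[-conj b,0]]`, `Q = [[0,b],[0,conj a]]`. -/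
def qwStep (a b : ℂ) (f : ℤ → ℂ × ℂ) : ℤ → ℂ × ℂ := fun x =>
  (a * (f (x + 1)).1 + b * (f (x - 1)).2,
   -(starRingEnd ℂ) b * (f (x + 1)).1 + (starRingEnd ℂ) a * (f (x - 1)).2)

/-- `δ₀ ⊗ φ : ℤ → ℂ²`. -/
def qwDelta (φ : ℂ × ℂ) : ℤ → ℂ × ℂ := fun x => if x = 0 then φ else 0

/-- Squared norm of a vector in `ℂ²`. -/
def nsq (u : ℂ × ℂ) : ℝ := ‖u.1‖ ^ 2 + ‖u.2‖ ^ 2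

/-- Transition probability `p_n(φ; y) = ‖(Uⁿ(δ₀ ⊗ φ))(y)‖²`. -/
def qwP (a b : ℂ) (φ : ℂ × ℂ) (n : ℕ) (y : ℤ) : ℝ :=
  nsq (((qwStep a b)^[n] (qwDelta φ)) y)

/-- `λ_A(φ) = |φ₂|² − |φ₁|² + (1/|a|²)(ab conj(φ₁)φ₂ + conj(ab) φ₁ conj(φ₂))` (a real number). -/
def lamA (a b : ℂ) (φ : ℂ × ℂ) : ℝ :=
  ‖φ.2‖ ^ 2 - ‖φ.1‖ ^ 2 +
    (a * b * (starRingEnd ℂ) φ.1 * φ.2 +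
      (starRingEnd ℂ) a * (starRingEnd ℂ) b * φ.1 * (starRingEnd ℂ) φ.2).re / ‖a‖ ^ 2

/-- `μ(t) = arccos(|a| cos t)`. -/
def muF (a : ℂ) (t : ℝ) : ℝ := Real.arccos (‖a‖ * Real.cos t)

/-- `t(η) = arcsin(|b|η/(|a|√(1 − η²)))`. -/
def tF (a b : ℂ) (η : ℝ) : ℝ := Real.arcsin (‖b‖ * η / (‖a‖ * Real.sqrt (1 - η ^ 2)))

/-- `θ(η) = 2μ(t(η)) − 2η t(η)`. -/
def thetaF (a b : ℂ) (η : ℝ) : ℝ := 2 * muF a (tF a b η) - 2 * η * tF a b η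

/-! ### Reduction to a real positive coin entry -/

/-- Multiplying the state at `x` by `(a/|a|)^x` turns the walk with coin `(a, b)` into the walk with
coin `(|a|, b a/|a|)`. -/
lemma qwStep_gauge (a b : ℂ) (ha : a ≠ 0) (f : ℤ → ℂ × ℂ) :
    qwStep (‖a‖ : ℂ) (b * (a / ‖a‖)) (fun x => ((a / ‖a‖) ^ x * (f x).1, (a / ‖a‖) ^ x * (f x).2)) =
      fun x => ((a / ‖a‖) ^ x * (qwStep a b f x).1, (a / ‖a‖) ^ x * (qwStep a b f x).2) := by
  have hn : (‖a‖ : ℂ) ≠ 0 := by simpa using ha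
  set w : ℂ := a / ‖a‖ with hw
  have hw0 : w ≠ 0 := div_ne_zero ha hn
  have haw : a = w * ‖a‖ := by rw [hw]; field_simp
  have hcw : (starRingEnd ℂ) w * w = 1 := by
    rw [mul_comm, Complex.mul_conj, Complex.normSq_eq_norm_sq, hw]
    simp [ha]
  have hcw' : (starRingEnd ℂ) w = w⁻¹ := eq_inv_of_mul_eq_one_left hcw
  have hca : (starRingEnd ℂ) a = w⁻¹ * ‖a‖ := by
    conv_lhs => rw [haw]
    rw [map_mul, hcw', Complex.conj_ofReal]
  funext x
  simp only [qwStep, map_mul, hcw', Complex.conj_ofReal, hca, zpow_add₀ hw0, zpow_sub₀ hw0, zpow_one]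
  have e1 : ∀ A B : ℂ, (‖a‖ : ℂ) * (w ^ x * w * A) + b * w * (w ^ x / w * B)
      = w ^ x * (a * A + b * B) := by
    intro A B
    conv_rhs => rw [haw]
    field_simp
  refine Prod.ext (e1 _ _) ?_
  simp only
  field_simp

lemma qwP_gauge (a b : ℂ) (ha : a ≠ 0) (φ : ℂ × ℂ) (n : ℕ) (y : ℤ) :
    qwP a b φ n y = qwP (‖a‖ : ℂ) (b * (a / ‖a‖)) φ n y := by
  have key : ∀ n : ℕ, (qwStep (‖a‖ : ℂ) (b * (a / ‖a‖)))^[n] (qwDelta φ) =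
      fun x => ((a / ‖a‖) ^ x * ((qwStep a b)^[n] (qwDelta φ) x).1,
        (a / ‖a‖) ^ x * ((qwStep a b)^[n] (qwDelta φ) x).2) := by
    intro n
    induction n with
    | zero =>
      funext x
      by_cases hx : x = 0
      · simp [qwDelta, hx]
      · simp [qwDelta, hx, Prod.zero_eq_mk]
    | succ n ih =>
      rw [Function.iterate_succ_apply', ih, qwStep_gauge a b ha, Function.iterate_succ_apply']
  have hw : ‖a / (‖a‖ : ℂ)‖ = 1 := by simp [ha]
  simp [qwP, nsq, key n, norm_zpow, ha]

lemma lamA_gauge (a b : ℂ) (ha : a ≠ 0) (φ : ℂ × ℂ) :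
    lamA a b φ = lamA (‖a‖ : ℂ) (b * (a / ‖a‖)) φ := by
  have hn : (‖a‖ : ℂ) ≠ 0 := by simpa using ha
  have h1 : (‖a‖ : ℂ) * (b * (a / ‖a‖)) = a * b := by field_simp
  have h2 : (starRingEnd ℂ) (‖a‖ : ℂ) * (starRingEnd ℂ) (b * (a / ‖a‖)) =
      (starRingEnd ℂ) a * (starRingEnd ℂ) b := by rw [← map_mul, h1, map_mul]
  simp only [lamA, h1, h2, Complex.norm_real, norm_norm]

/-! ### Fourier series of finitely supported functions -/

lemma qwIter_support (a b : ℂ) (φ : ℂ × ℂ) (n : ℕ) (x : ℤ) (hx : x ∉ Finset.Icc (-(n : ℤ)) n) :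
    (qwStep a b)^[n] (qwDelta φ) x = 0 := by
  induction n generalizing x with
  | zero =>
    have : x ≠ 0 := by rintro rfl; simp at hx
    simp [qwDelta, this]
  | succ n ih =>
    rw [Function.iterate_succ_apply']
    have h1 := ih (x + 1) (by simp only [Finset.mem_Icc] at *; push_cast at hx; omega)
    have h2 := ih (x - 1) (by simp only [Finset.mem_Icc] at *; push_cast at hx; omega)
    simp [qwStep, h1, h2]

/-- The Fourier series `∑ₓ g(x) e^{itx}`; it is only used for finitely supported `g`. -/
def fser (g : ℤ → ℂ) (t : ℝ) : ℂ := ∑' x : ℤ, g x * Complex.exp (t * x * Complex.I)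

lemma fser_eq_sum {g : ℤ → ℂ} {S : Finset ℤ} (hg : ∀ x ∉ S, g x = 0) (t : ℝ) :
    fser g t = ∑ x ∈ S, g x * Complex.exp (t * x * Complex.I) :=
  tsum_eq_sum (fun x hx => by simp [hg x hx])

lemma summable_fser {g : ℤ → ℂ} {S : Finset ℤ} (hg : ∀ x ∉ S, g x = 0) (t : ℝ) :
    Summable fun x : ℤ => g x * Complex.exp (t * x * Complex.I) :=
  summable_of_ne_finset_zero (s := S) (fun x hx => by simp [hg x hx])

lemma fser_shift (g : ℤ → ℂ) (t : ℝ) (c : ℤ) :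
    fser (fun x => g (x + c)) t = Complex.exp (-(t * c * Complex.I)) * fser g t := by
  unfold fser
  rw [← (Equiv.addRight c).tsum_eq (fun x : ℤ => g x * Complex.exp (t * x * Complex.I)),
    ← tsum_mul_left]
  refine tsum_congr fun x => ?_
  simp only [Equiv.coe_addRight]
  rw [mul_left_comm, ← Complex.exp_add]
  congr 2
  push_cast
  ring

lemma fser_linear {g h : ℤ → ℂ} {S T : Finset ℤ} (hg : ∀ x ∉ S, g x = 0) (hh : ∀ x ∉ T, h x = 0)
    (c d : ℂ) (t : ℝ) :
    fser (fun x => c * g (x + 1) + d * h (x - 1)) t =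
      c * (Complex.exp (-(t * Complex.I)) * fser g t) +
        d * (Complex.exp (t * Complex.I) * fser h t) := by
  have h1 := fser_shift g t 1
  have h2 := fser_shift h t (-1)
  have s1 : Summable fun x : ℤ => g (x + 1) * Complex.exp (t * x * Complex.I) :=
    summable_fser (g := fun x => g (x + 1)) (S := S.image (· - 1)) (fun x hx => hg _ (fun hx' => hx (by
      simp only [Finset.mem_image]; exact ⟨x + 1, hx', by ring⟩))) t
  have s2 : Summable fun x : ℤ => h (x + -1) * Complex.exp (t * x * Complex.I) :=
    summable_fser (g := fun x => h (x + -1)) (S := T.image (· + 1)) (fun x hx => hh _ (fun hx' => hx (by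
      simp only [Finset.mem_image]; exact ⟨x + -1, hx', by ring⟩))) t
  have e1 : Complex.exp (-(t * Complex.I)) * fser g t = fser (fun x => g (x + 1)) t := by
    rw [h1]; simp
  have e2 : Complex.exp (t * Complex.I) * fser h t = fser (fun x => h (x + -1)) t := by
    rw [h2]; simp
  rw [e1, e2]
  unfold fser
  rw [← tsum_mul_left, ← tsum_mul_left, ← (s1.mul_left c).tsum_add (s2.mul_left d)]
  refine tsum_congr fun x => ?_
  simp only [sub_eq_add_neg]
  ring

lemma integral_exp_int (m : ℤ) :
    ∫ t in (-Real.pi)..Real.pi, Complex.exp (t * m * Complex.I) =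
      if m = 0 then 2 * (Real.pi : ℂ) else 0 := by
  by_cases hm : m = 0
  · simp [hm]; ring
  · have hm' : (m : ℂ) ≠ 0 := by exact_mod_cast hm
    have := integral_exp_mul_complex (a := -Real.pi) (b := Real.pi) (c := m * Complex.I)
      (mul_ne_zero hm' Complex.I_ne_zero)
    simp only [hm, if_false]
    have e : ∀ t : ℝ, Complex.exp (t * m * Complex.I) = Complex.exp (m * Complex.I * t) := by
      intro t; congr 1; ring
    simp_rw [e, this]
    have : Complex.exp (m * Complex.I * (Real.pi : ℝ)) =
        Complex.exp (m * Complex.I * ((-Real.pi : ℝ) : ℂ)) := by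
      rw [Complex.exp_eq_exp_iff_exists_int]
      exact ⟨m, by push_cast; ring⟩
    rw [this]; simp

/-- Parseval's identity for `g` and `g(x) e^{iηx}`. -/
lemma parseval_shift {g : ℤ → ℂ} {S : Finset ℤ} (hg : ∀ x ∉ S, g x = 0) (η : ℝ) :
    ∫ t in (-Real.pi)..Real.pi, (starRingEnd ℂ) (fser g t) * fser g (t + η) =
      2 * Real.pi * ∑ x ∈ S, (‖g x‖ ^ 2 : ℝ) * Complex.exp (η * x * Complex.I) := by
  have e : ∀ t : ℝ, (starRingEnd ℂ) (fser g t) * fser g (t + η) =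
      ∑ x ∈ S, ∑ y ∈ S, ((starRingEnd ℂ) (g x) * g y * Complex.exp (η * y * Complex.I)) *
        Complex.exp (t * ((y - x : ℤ) : ℂ) * Complex.I) := by
    intro t
    rw [fser_eq_sum hg, fser_eq_sum hg, map_sum, Finset.sum_mul_sum]
    refine Finset.sum_congr rfl fun x _ => Finset.sum_congr rfl fun y _ => ?_
    rw [map_mul, ← Complex.exp_conj]
    simp only [map_mul, Complex.conj_ofReal, Complex.conj_I, map_intCast]
    have : Complex.exp (((t + η : ℝ) : ℂ) * y * Complex.I) * Complex.exp (t * x * -Complex.I) =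
        Complex.exp (η * y * Complex.I) * Complex.exp (t * ((y - x : ℤ) : ℂ) * Complex.I) := by
      rw [← Complex.exp_add, ← Complex.exp_add]; congr 1; push_cast; ring
    linear_combination ((starRingEnd ℂ) (g x) * g y) * this
  simp_rw [e]
  have hc : ∀ (c : ℂ) (m : ℤ), IntervalIntegrable
      (fun t : ℝ => c * Complex.exp (t * (m : ℂ) * Complex.I)) volume (-Real.pi) Real.pi :=
    fun c m => Continuous.intervalIntegrable (by fun_prop) _ _
  rw [intervalIntegral.integral_finsetSum (fun x _ =>
    Continuous.intervalIntegrable (by fun_prop) _ _)]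
  rw [Finset.mul_sum]
  refine Finset.sum_congr rfl fun x hx => ?_
  rw [intervalIntegral.integral_finsetSum (fun y _ => hc _ _)]
  simp_rw [intervalIntegral.integral_const_mul, integral_exp_int]
  rw [Finset.sum_eq_single x]
  · rw [sub_self, if_pos rfl, mul_comm ((starRingEnd ℂ) (g x)), Complex.mul_conj,
      Complex.normSq_eq_norm_sq]
    ring
  · intro y _ hy
    rw [if_neg (by omega), mul_zero]
  · intro h; exact absurd hx h

/-! ### Spectral form of the walk -/

/-- `sin μ(t)`, where `e^{±iμ(t)}`, `cos μ(t) = r cos t`, are the eigenvalues of the walk operator at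
quasi-momentum `t`. -/
def om (r t : ℝ) : ℝ := √(1 - (r * Real.cos t) ^ 2)

/-- The phase `μ(t) = arccos (r cos t)` of the eigenvalues. -/
def phase (r t : ℝ) : ℝ := Real.arccos (r * Real.cos t)

/-- The group velocity `μ'(t)`. -/
def vel (r t : ℝ) : ℝ := r * Real.sin t / om r t

/-- First component of `i H(t) φ`, where `H(t)` is the traceless Hermitian involution for which the
walk operator at quasi-momentum `t` is `cos μ(t) + i sin μ(t) H(t)`. -/
def psi1 (r : ℝ) (B : ℂ) (φ : ℂ × ℂ) (t : ℝ) : ℂ :=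
  (-(r * Real.sin t) * Complex.I * φ.1 + B * Complex.exp (t * Complex.I) * φ.2) / om r t

/-- Second component of `i H(t) φ`, see `psi1`. -/
def psi2 (r : ℝ) (B : ℂ) (φ : ℂ × ℂ) (t : ℝ) : ℂ :=
  (-(starRingEnd ℂ) B * Complex.exp (-(t * Complex.I)) * φ.1 +
    r * Real.sin t * Complex.I * φ.2) / om r t

/-- `⟨φ, H(t) φ⟩`. -/
def hF (r : ℝ) (B : ℂ) (φ : ℂ × ℂ) (t : ℝ) : ℝ :=
  lamA r B φ * vel r t + 2 * ((starRingEnd ℂ) φ.1 * φ.2 * B).im * Real.cos t / om r t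

lemma abs_r_cos {r : ℝ} (hr0 : 0 < r) (hr1 : r < 1) (t : ℝ) : (r * Real.cos t) ^ 2 < 1 := by
  have h1 := Real.cos_sq_le_one t
  have h2 : r ^ 2 < 1 := by nlinarith
  rw [mul_pow]
  nlinarith [sq_nonneg r, sq_nonneg (Real.cos t)]

lemma om_sq {r : ℝ} (hr0 : 0 < r) (hr1 : r < 1) (t : ℝ) : om r t ^ 2 = 1 - (r * Real.cos t) ^ 2 :=
  Real.sq_sqrt (by linarith [abs_r_cos hr0 hr1 t])

lemma om_pos {r : ℝ} (hr0 : 0 < r) (hr1 : r < 1) (t : ℝ) : 0 < om r t :=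
  Real.sqrt_pos.2 (by linarith [abs_r_cos hr0 hr1 t])

lemma continuous_om (r : ℝ) : Continuous (om r) := by unfold om; fun_prop

lemma continuous_vel {r : ℝ} (hr0 : 0 < r) (hr1 : r < 1) : Continuous (vel r) := by
  unfold vel
  exact (by fun_prop : Continuous fun t => r * Real.sin t).div (continuous_om r)
    (fun t => (om_pos hr0 hr1 t).ne')

lemma cos_phase {r : ℝ} (hr0 : 0 < r) (hr1 : r < 1) (t : ℝ) : Real.cos (phase r t) = r * Real.cos t := by
  have := (sq_lt_one_iff_abs_lt_one _).1 (abs_r_cos hr0 hr1 t)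
  exact Real.cos_arccos (abs_lt.1 this).1.le (abs_lt.1 this).2.le

lemma sin_phase (r t : ℝ) : Real.sin (phase r t) = om r t := Real.sin_arccos _

lemma hasDerivAt_phase {r : ℝ} (hr0 : 0 < r) (hr1 : r < 1) (t : ℝ) : HasDerivAt (phase r) (vel r t) t := by
  have h := abs_lt.1 ((sq_lt_one_iff_abs_lt_one _).1 (abs_r_cos hr0 hr1 t))
  have h2 : HasDerivAt (phase r) _ t :=
    (Real.hasDerivAt_arccos h.1.ne' h.2.ne).comp t ((Real.hasDerivAt_cos t).const_mul r)
  exact h2.congr_deriv (by simp only [vel, om]; ring)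

lemma exp_cos_sin (t : ℝ) :
    Complex.exp (t * Complex.I) = Real.cos t + Real.sin t * Complex.I := by
  rw [Complex.exp_mul_I, Complex.ofReal_cos, Complex.ofReal_sin]

lemma exp_neg_cos_sin (t : ℝ) :
    Complex.exp (-(t * Complex.I)) = Real.cos t - Real.sin t * Complex.I := by
  rw [← neg_mul, Complex.exp_mul_I, Complex.ofReal_cos, Complex.ofReal_sin, Complex.cos_neg,
    Complex.sin_neg]
  ring

/-- In momentum space the state at time `n` is `cos (n μ(t)) φ + sin (n μ(t)) ψ(t)` with
`ψ = iHφ`. -/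
lemma fser_iter {r : ℝ} (hr0 : 0 < r) (hr1 : r < 1) {B : ℂ} (hB : r ^ 2 + ‖B‖ ^ 2 = 1) (φ : ℂ × ℂ) (n : ℕ) (t : ℝ) :
    fser (fun x => ((qwStep r B)^[n] (qwDelta φ) x).1) t =
        Real.cos (n * phase r t) * φ.1 + Real.sin (n * phase r t) * psi1 r B φ t ∧
      fser (fun x => ((qwStep r B)^[n] (qwDelta φ) x).2) t =
        Real.cos (n * phase r t) * φ.2 + Real.sin (n * phase r t) * psi2 r B φ t := by
  induction n with
  | zero =>
    have h0 : ∀ x ∉ ({0} : Finset ℤ), (qwDelta φ x).1 = 0 := fun x hx => by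
      simp at hx; simp [qwDelta, hx]
    have h0' : ∀ x ∉ ({0} : Finset ℤ), (qwDelta φ x).2 = 0 := fun x hx => by
      simp at hx; simp [qwDelta, hx]
    simp only [Function.iterate_zero, id]
    rw [fser_eq_sum h0, fser_eq_sum h0']
    simp [qwDelta]
  | succ n ih =>
    have s1 : ∀ x ∉ Finset.Icc (-(n : ℤ)) n, ((qwStep r B)^[n] (qwDelta φ) x).1 = 0 :=
      fun x hx => by rw [qwIter_support _ _ _ _ _ hx]; rfl
    have s2 : ∀ x ∉ Finset.Icc (-(n : ℤ)) n, ((qwStep r B)^[n] (qwDelta φ) x).2 = 0 :=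
      fun x hx => by rw [qwIter_support _ _ _ _ _ hx]; rfl
    simp only [Function.iterate_succ_apply', qwStep]
    rw [fser_linear s1 s2, fser_linear s1 s2, ih.1, ih.2]
    have hc : Real.cos ((n + 1 : ℕ) * phase r t) =
        Real.cos (n * phase r t) * (r * Real.cos t) - Real.sin (n * phase r t) * om r t := by
      push_cast
      rw [add_mul, one_mul, Real.cos_add, cos_phase hr0 hr1, sin_phase]
    have hs : Real.sin ((n + 1 : ℕ) * phase r t) =
        Real.sin (n * phase r t) * (r * Real.cos t) + Real.cos (n * phase r t) * om r t := by
      push_cast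
      rw [add_mul, one_mul, Real.sin_add, cos_phase hr0 hr1, sin_phase]
    rw [hc, hs]
    have hom : (om r t : ℂ) ≠ 0 := by exact_mod_cast (om_pos hr0 hr1 t).ne'
    have hom2 : (om r t : ℂ) ^ 2 = 1 - (r * Real.cos t) ^ 2 := by exact_mod_cast om_sq hr0 hr1 t
    have hBB : B * (starRingEnd ℂ) B = 1 - r ^ 2 := by
      rw [Complex.mul_conj, Complex.normSq_eq_norm_sq]
      have : ‖B‖ ^ 2 = 1 - r ^ 2 := by linarith
      rw [this]; push_cast; ring
    have hcs : (Real.sin t : ℂ) ^ 2 + (Real.cos t : ℂ) ^ 2 = 1 := by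
      exact_mod_cast Real.sin_sq_add_cos_sq t
    have hE := exp_cos_sin t
    have hE' := exp_neg_cos_sin t
    simp only [Complex.conj_ofReal, psi1, psi2, hE, hE']
    generalize (starRingEnd ℂ) B = Bc at *
    generalize (Real.cos (n * phase r t)) = c at *
    generalize (Real.sin (n * phase r t)) = s at *
    simp only [Complex.ofReal_mul, Complex.ofReal_add, Complex.ofReal_sub]
    generalize (Real.cos t : ℂ) = C at *
    generalize (Real.sin t : ℂ) = S at *
    generalize (om r t : ℂ) = w at *
    have hI := Complex.I_sq
    obtain ⟨u, v⟩ := φ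
    simp only
    -- `i1` and `i2` are the components of `Û ψ = cos μ ψ - sin μ φ` for the walk operator `Û`.
    have i1 : r * (C - S * Complex.I) * ((-(r * S) * Complex.I * u + B * (C + S * Complex.I) * v) / w)
        + B * (C + S * Complex.I) * ((-Bc * (C - S * Complex.I) * u + r * S * Complex.I * v) / w) =
        r * C * ((-(r * S) * Complex.I * u + B * (C + S * Complex.I) * v) / w) - w * u := by
      field_simp
      linear_combination u * hom2 - (C + S * Complex.I) * (C - S * Complex.I) * u * hBB +
        S ^ 2 * u * hI - u * hcs
    have i2 : -Bc * (C - S * Complex.I) * ((-(r * S) * Complex.I * u + B * (C + S * Complex.I) * v) / w)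
        + r * (C + S * Complex.I) * ((-Bc * (C - S * Complex.I) * u + r * S * Complex.I * v) / w) =
        r * C * ((-Bc * (C - S * Complex.I) * u + r * S * Complex.I * v) / w) - w * v := by
      field_simp
      linear_combination v * hom2 - (C + S * Complex.I) * (C - S * Complex.I) * v * hBB +
        S ^ 2 * v * hI - v * hcs
    constructor
    · have j1 : w * ((-(r * S) * Complex.I * u + B * (C + S * Complex.I) * v) / w) =
          -(r * S) * Complex.I * u + B * (C + S * Complex.I) * v := by field_simp
      linear_combination s * i1 - c * j1
    · have j2 : w * ((-Bc * (C - S * Complex.I) * u + r * S * Complex.I * v) / w) =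
          -Bc * (C - S * Complex.I) * u + r * S * Complex.I * v := by field_simp
      linear_combination s * i2 - c * j2

lemma lamA_real {r : ℝ} (hr0 : 0 < r) (B : ℂ) (φ : ℂ × ℂ) :
    lamA r B φ = ‖φ.2‖ ^ 2 - ‖φ.1‖ ^ 2 + 2 * ((starRingEnd ℂ) φ.1 * φ.2 * B).re / r := by
  have h : (r : ℂ) * B * (starRingEnd ℂ) φ.1 * φ.2 +
      (starRingEnd ℂ) (r : ℂ) * (starRingEnd ℂ) B * φ.1 * (starRingEnd ℂ) φ.2 =
      ((r * (2 * ((starRingEnd ℂ) φ.1 * φ.2 * B).re) : ℝ) : ℂ) := by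
    rw [Complex.ofReal_mul, Complex.ofReal_mul, Complex.re_eq_add_conj]
    simp only [map_mul, Complex.conj_ofReal, Complex.conj_conj]
    push_cast
    ring
  rw [lamA, h, Complex.ofReal_re, Complex.norm_real, Real.norm_of_nonneg hr0.le]
  field_simp

lemma inner_phi_psi {r : ℝ} (hr0 : 0 < r) (hr1 : r < 1) (B : ℂ) (φ : ℂ × ℂ) (t : ℝ) :
    (starRingEnd ℂ) φ.1 * psi1 r B φ t + (starRingEnd ℂ) φ.2 * psi2 r B φ t =
      Complex.I * hF r B φ t := by
  have hom : (om r t : ℂ) ≠ 0 := by exact_mod_cast (om_pos hr0 hr1 t).ne'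
  have hE := exp_cos_sin t
  have hE' := exp_neg_cos_sin t
  have hw := (om_pos hr0 hr1 t).ne'
  simp only [psi1, psi2, hE, hE', hF, lamA_real hr0, vel, Complex.sq_norm, Complex.normSq_apply]
  obtain ⟨⟨x, y⟩, ⟨p, q⟩⟩ := φ
  obtain ⟨m, k⟩ := B
  generalize Real.cos t = C at *
  generalize Real.sin t = S at *
  generalize om r t = w at *
  rw [← mul_div_assoc, ← mul_div_assoc, ← add_div, div_eq_iff hom]
  apply Complex.ext
  · simp
    ring
  · simp
    field_simp
    ring

/-- `ψ(t)` is a unit vector, because `H(t)` is unitary. -/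
lemma inner_psi_psi {r : ℝ} (hr0 : 0 < r) (hr1 : r < 1) {B : ℂ} (hB : r ^ 2 + ‖B‖ ^ 2 = 1)
    {φ : ℂ × ℂ} (hφ : nsq φ = 1) (t : ℝ) :
    ‖psi1 r B φ t‖ ^ 2 + ‖psi2 r B φ t‖ ^ 2 = 1 := by
  have hw := om_pos hr0 hr1 t
  have hw2 := om_sq hr0 hr1 t
  have hE := exp_cos_sin t
  have hE' := exp_neg_cos_sin t
  have hcs := Real.sin_sq_add_cos_sq t
  simp only [psi1, psi2, hE, hE', norm_div, div_pow, Complex.norm_real, Real.norm_of_nonneg hw.le]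
  rw [← add_div, div_eq_one_iff_eq (by positivity), hw2]
  simp only [nsq, Complex.sq_norm, Complex.normSq_apply] at *
  obtain ⟨⟨x, y⟩, ⟨p, q⟩⟩ := φ
  obtain ⟨m, k⟩ := B
  generalize Real.cos t = C at *
  generalize Real.sin t = S at *
  simp at *
  linear_combination (r ^ 2 * S ^ 2 + (m * m + k * k) * (C ^ 2 + S ^ 2)) * hφ + (S ^ 2 + C ^ 2) * hB
     + hcs

/-! ### Convergence of the characteristic functions -/

/-- The inner product of the Fourier transforms of the state at time `n` at the quasi-momenta `t` and
`t + η`. -/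
def corr (r : ℝ) (B : ℂ) (φ : ℂ × ℂ) (n : ℕ) (η t : ℝ) : ℂ :=
  (starRingEnd ℂ) (fser (fun x => ((qwStep r B)^[n] (qwDelta φ) x).1) t) *
      fser (fun x => ((qwStep r B)^[n] (qwDelta φ) x).1) (t + η) +
    (starRingEnd ℂ) (fser (fun x => ((qwStep r B)^[n] (qwDelta φ) x).2) t) *
      fser (fun x => ((qwStep r B)^[n] (qwDelta φ) x).2) (t + η)

lemma continuous_fser {g : ℤ → ℂ} {S : Finset ℤ} (hg : ∀ x ∉ S, g x = 0) : Continuous (fser g) := by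
  have : fser g = fun t : ℝ => ∑ x ∈ S, g x * Complex.exp (t * x * Complex.I) :=
    funext (fser_eq_sum hg)
  rw [this]
  fun_prop

lemma qwIter_support_fst (a b : ℂ) (φ : ℂ × ℂ) (n : ℕ) :
    ∀ x ∉ Finset.Icc (-(n : ℤ)) n, ((qwStep a b)^[n] (qwDelta φ) x).1 = 0 :=
  fun x hx => by rw [qwIter_support _ _ _ _ _ hx]; rfl

lemma qwIter_support_snd (a b : ℂ) (φ : ℂ × ℂ) (n : ℕ) :
    ∀ x ∉ Finset.Icc (-(n : ℤ)) n, ((qwStep a b)^[n] (qwDelta φ) x).2 = 0 :=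
  fun x hx => by rw [qwIter_support _ _ _ _ _ hx]; rfl

lemma continuous_corr_parts (r : ℝ) (B : ℂ) (φ : ℂ × ℂ) (n : ℕ) (η : ℝ) :
    (Continuous fun t => (starRingEnd ℂ) (fser (fun x => ((qwStep r B)^[n] (qwDelta φ) x).1) t) *
      fser (fun x => ((qwStep r B)^[n] (qwDelta φ) x).1) (t + η)) ∧
    (Continuous fun t => (starRingEnd ℂ) (fser (fun x => ((qwStep r B)^[n] (qwDelta φ) x).2) t) *
      fser (fun x => ((qwStep r B)^[n] (qwDelta φ) x).2) (t + η)) := by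
  have h1 := continuous_fser (qwIter_support_fst r B φ n)
  have h2 := continuous_fser (qwIter_support_snd r B φ n)
  constructor
  · exact (Complex.continuous_conj.comp h1).mul (h1.comp (continuous_id.add continuous_const))
  · exact (Complex.continuous_conj.comp h2).mul (h2.comp (continuous_id.add continuous_const))

lemma continuous_corr (r : ℝ) (B : ℂ) (φ : ℂ × ℂ) (n : ℕ) (η : ℝ) :
    Continuous (corr r B φ n η) :=
  (continuous_corr_parts r B φ n η).1.add (continuous_corr_parts r B φ n η).2

lemma integral_corr (r : ℝ) (B : ℂ) (φ : ℂ × ℂ) (n : ℕ) (η : ℝ) :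
    ∫ t in (-Real.pi)..Real.pi, corr r B φ n η t =
      2 * Real.pi * ∑ y ∈ Finset.Icc (-(n : ℤ)) n,
        (qwP r B φ n y : ℂ) * Complex.exp (η * y * Complex.I) := by
  obtain ⟨c1, c2⟩ := continuous_corr_parts r B φ n η
  unfold corr
  rw [intervalIntegral.integral_add (c1.intervalIntegrable _ _) (c2.intervalIntegrable _ _),
    parseval_shift (qwIter_support_fst r B φ n), parseval_shift (qwIter_support_snd r B φ n),
    ← mul_add, ← Finset.sum_add_distrib]
  congr 1
  refine Finset.sum_congr rfl fun y _ => ?_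
  rw [qwP, nsq, ← add_mul]
  push_cast
  rfl

/-- The first two terms carry the limit; the others are bounded factors times increments of `ψ`. -/
lemma corr_eq {r : ℝ} (hr0 : 0 < r) (hr1 : r < 1) {B : ℂ} (hB : r ^ 2 + ‖B‖ ^ 2 = 1)
    {φ : ℂ × ℂ} (hφ : nsq φ = 1) (n : ℕ) (η t : ℝ) :
    corr r B φ n η t =
      Real.cos (n * (phase r (t + η) - phase r t)) +
        Complex.I * hF r B φ t * Real.sin (n * (phase r (t + η) - phase r t)) +
      Real.cos (n * phase r t) * Real.sin (n * phase r (t + η)) *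
        ((starRingEnd ℂ) φ.1 * (psi1 r B φ (t + η) - psi1 r B φ t) +
          (starRingEnd ℂ) φ.2 * (psi2 r B φ (t + η) - psi2 r B φ t)) +
      Real.sin (n * phase r t) * Real.sin (n * phase r (t + η)) *
        ((starRingEnd ℂ) (psi1 r B φ t) * (psi1 r B φ (t + η) - psi1 r B φ t) +
          (starRingEnd ℂ) (psi2 r B φ t) * (psi2 r B φ (t + η) - psi2 r B φ t)) := by
  have h1 := inner_phi_psi hr0 hr1 B φ t
  have h2 := congrArg (starRingEnd ℂ) h1
  simp only [map_add, map_mul, Complex.conj_conj, Complex.conj_I, Complex.conj_ofReal] at h2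
  have h3 : (starRingEnd ℂ) (psi1 r B φ t) * psi1 r B φ t +
      (starRingEnd ℂ) (psi2 r B φ t) * psi2 r B φ t = 1 := by
    rw [mul_comm, Complex.mul_conj, mul_comm ((starRingEnd ℂ) (psi2 r B φ t)), Complex.mul_conj,
      Complex.normSq_eq_norm_sq, Complex.normSq_eq_norm_sq]
    exact_mod_cast inner_psi_psi hr0 hr1 hB hφ t
  have h4 : (starRingEnd ℂ) φ.1 * φ.1 + (starRingEnd ℂ) φ.2 * φ.2 = 1 := by
    rw [mul_comm, Complex.mul_conj, mul_comm ((starRingEnd ℂ) φ.2), Complex.mul_conj,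
      Complex.normSq_eq_norm_sq, Complex.normSq_eq_norm_sq]
    exact_mod_cast hφ
  rw [corr, (fser_iter hr0 hr1 hB φ n t).1, (fser_iter hr0 hr1 hB φ n t).2,
    (fser_iter hr0 hr1 hB φ n (t + η)).1, (fser_iter hr0 hr1 hB φ n (t + η)).2, mul_sub,
    Real.cos_sub, Real.sin_sub]
  simp only [map_add, map_mul, Complex.conj_ofReal, Complex.ofReal_add, Complex.ofReal_mul,
    Complex.ofReal_sub]
  generalize ((Real.cos (n * phase r t) : ℝ) : ℂ) = c
  generalize ((Real.sin (n * phase r t) : ℝ) : ℂ) = s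
  generalize ((Real.cos (n * phase r (t + η)) : ℝ) : ℂ) = c'
  generalize ((Real.sin (n * phase r (t + η)) : ℝ) : ℂ) = s'
  linear_combination c * c' * h4 + c * s' * h1 + s * c' * h2 + s * s' * h3

lemma continuous_psi {r : ℝ} (hr0 : 0 < r) (hr1 : r < 1) (B : ℂ) (φ : ℂ × ℂ) :
    Continuous (psi1 r B φ) ∧ Continuous (psi2 r B φ) := by
  have ho : Continuous fun t => (om r t : ℂ) := Complex.continuous_ofReal.comp (continuous_om r)
  have hne : ∀ t, (om r t : ℂ) ≠ 0 := fun t => by exact_mod_cast (om_pos hr0 hr1 t).ne'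
  constructor
  · unfold psi1
    exact Continuous.div (by fun_prop) ho hne
  · unfold psi2
    exact Continuous.div (by fun_prop) ho hne

lemma tendsto_corr {r : ℝ} (hr0 : 0 < r) (hr1 : r < 1) {B : ℂ} (hB : r ^ 2 + ‖B‖ ^ 2 = 1)
    {φ : ℂ × ℂ} (hφ : nsq φ = 1) (ξ t : ℝ) :
    Tendsto (fun n : ℕ => corr r B φ n (ξ / n) t) atTop
      (𝓝 (Real.cos (ξ * vel r t) + Complex.I * hF r B φ t * Real.sin (ξ * vel r t))) := by
  have hη : Tendsto (fun n : ℕ => t + ξ / n) atTop (𝓝 t) := by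
    simpa using (tendsto_const_div_atTop_nhds_zero_nat ξ).const_add t
  -- `n (μ(t + ξ/n) - μ(t)) → ξ μ'(t)`
  have hΔ : Tendsto (fun n : ℕ => (n : ℝ) * (phase r (t + ξ / n) - phase r t)) atTop
      (𝓝 (ξ * vel r t)) := by
    have hd : HasDerivAt (fun s : ℝ => phase r (t + ξ * s)) (ξ * vel r t) 0 := by
      have e : HasDerivAt (fun s : ℝ => t + ξ * s) ξ 0 := by
        simpa using ((hasDerivAt_id (0 : ℝ)).const_mul ξ).const_add t
      have := HasDerivAt.comp (0 : ℝ) (h₂ := phase r) (h := fun s : ℝ => t + ξ * s)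
        (h₂' := vel r t) (by simpa using hasDerivAt_phase hr0 hr1 t) e
      exact this.congr_deriv (by ring)
    have hs := hd.tendsto_slope
    have hn : Tendsto (fun n : ℕ => ((n : ℝ))⁻¹) atTop (𝓝[≠] 0) := by
      refine tendsto_nhdsWithin_iff.2 ⟨tendsto_inv_atTop_nhds_zero_nat, ?_⟩
      filter_upwards [eventually_gt_atTop 0] with n hn
      simp; omega
    refine (hs.comp hn).congr fun n => ?_
    simp [slope_def_field, div_eq_mul_inv, mul_comm]
  obtain ⟨hp1, hp2⟩ := continuous_psi hr0 hr1 B φ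
  have l1 := (hp1.tendsto t).comp hη
  have l2 := (hp2.tendsto t).comp hη
  have d1 : Tendsto (fun n : ℕ => psi1 r B φ (t + ξ / n) - psi1 r B φ t) atTop (𝓝 0) := by
    simpa using l1.sub_const (psi1 r B φ t)
  have d2 : Tendsto (fun n : ℕ => psi2 r B φ (t + ξ / n) - psi2 r B φ t) atTop (𝓝 0) := by
    simpa using l2.sub_const (psi2 r B φ t)
  have z : ∀ (c : ℕ → ℂ) (e : ℕ → ℂ), (∀ n, ‖c n‖ ≤ 1) → Tendsto e atTop (𝓝 0) →
      Tendsto (fun n => c n * e n) atTop (𝓝 0) := by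
    intro c e hc he
    refine squeeze_zero_norm (fun n => ?_) (tendsto_zero_iff_norm_tendsto_zero.1 he)
    rw [norm_mul]
    exact mul_le_of_le_one_left (norm_nonneg _) (hc n)
  have bd : ∀ x y : ℝ, |x| ≤ 1 → |y| ≤ 1 → ‖(x : ℂ) * (y : ℂ)‖ ≤ 1 := by
    intro x y hx hy
    rw [norm_mul, Complex.norm_real, Complex.norm_real]
    exact mul_le_one₀ hx (norm_nonneg _) hy
  have e1 := z (fun n : ℕ => (Real.cos (n * phase r t) : ℂ) * (Real.sin (n * phase r (t + ξ / n)) : ℂ)) _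
    (fun n => bd _ _ (Real.abs_cos_le_one _) (Real.abs_sin_le_one _))
    (by simpa using (d1.const_mul ((starRingEnd ℂ) φ.1)).add (d2.const_mul ((starRingEnd ℂ) φ.2)))
  have e2 := z (fun n : ℕ => (Real.sin (n * phase r t) : ℂ) * (Real.sin (n * phase r (t + ξ / n)) : ℂ)) _
    (fun n => bd _ _ (Real.abs_sin_le_one _) (Real.abs_sin_le_one _))
    (by simpa using (d1.const_mul ((starRingEnd ℂ) (psi1 r B φ t))).add
          (d2.const_mul ((starRingEnd ℂ) (psi2 r B φ t))))
  have m1 := (Complex.continuous_ofReal.tendsto _).comp ((Real.continuous_cos.tendsto _).comp hΔ)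
  have m2 := (Complex.continuous_ofReal.tendsto _).comp ((Real.continuous_sin.tendsto _).comp hΔ)
  have := ((m1.add (m2.const_mul (Complex.I * hF r B φ t))).add e1).add e2
  simp only [add_zero] at this
  refine this.congr fun n => ?_
  rw [corr_eq hr0 hr1 hB hφ]
  rfl

lemma norm_corr_le {r : ℝ} (hr0 : 0 < r) (hr1 : r < 1) {B : ℂ} (hB : r ^ 2 + ‖B‖ ^ 2 = 1)
    {φ : ℂ × ℂ} (hφ : nsq φ = 1) (n : ℕ) (η t : ℝ) : ‖corr r B φ n η t‖ ≤ 8 := by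
  have b : ∀ t : ℝ, ‖fser (fun x => ((qwStep r B)^[n] (qwDelta φ) x).1) t‖ ≤ 2 ∧
      ‖fser (fun x => ((qwStep r B)^[n] (qwDelta φ) x).2) t‖ ≤ 2 := by
    intro t
    rw [(fser_iter hr0 hr1 hB φ n t).1, (fser_iter hr0 hr1 hB φ n t).2]
    have hψ := inner_psi_psi hr0 hr1 hB hφ t
    unfold nsq at hφ
    have key : ∀ u v : ℂ, ‖u‖ ^ 2 ≤ 1 → ‖v‖ ^ 2 ≤ 1 →
        ‖(Real.cos (n * phase r t) : ℂ) * u + (Real.sin (n * phase r t) : ℂ) * v‖ ≤ 2 := by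
      intro u v hu hv
      have hu' : ‖u‖ ≤ 1 := by nlinarith [norm_nonneg u]
      have hv' : ‖v‖ ≤ 1 := by nlinarith [norm_nonneg v]
      refine (norm_add_le _ _).trans ?_
      rw [norm_mul, norm_mul, Complex.norm_real, Complex.norm_real]
      have := mul_le_one₀ (Real.abs_cos_le_one (n * phase r t)) (norm_nonneg u) hu'
      have := mul_le_one₀ (Real.abs_sin_le_one (n * phase r t)) (norm_nonneg v) hv'
      simp only [Real.norm_eq_abs]
      linarith
    constructor <;> apply key <;> nlinarith [sq_nonneg ‖φ.1‖, sq_nonneg ‖φ.2‖,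
      sq_nonneg ‖psi1 r B φ t‖, sq_nonneg ‖psi2 r B φ t‖]
  refine (norm_add_le _ _).trans ?_
  simp only [norm_mul, RCLike.norm_conj]
  have h1 := mul_le_mul (b t).1 (b (t + η)).1 (norm_nonneg _) zero_le_two
  have h2 := mul_le_mul (b t).2 (b (t + η)).2 (norm_nonneg _) zero_le_two
  linarith

lemma tendsto_integral_corr {r : ℝ} (hr0 : 0 < r) (hr1 : r < 1) {B : ℂ} (hB : r ^ 2 + ‖B‖ ^ 2 = 1)
    {φ : ℂ × ℂ} (hφ : nsq φ = 1) (ξ : ℝ) :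
    Tendsto (fun n : ℕ => ∫ t in (-Real.pi)..Real.pi, corr r B φ n (ξ / n) t) atTop
      (𝓝 (∫ t in (-Real.pi)..Real.pi,
        (Real.cos (ξ * vel r t) + Complex.I * hF r B φ t * Real.sin (ξ * vel r t)))) := by
  refine intervalIntegral.tendsto_integral_filter_of_dominated_convergence (fun _ => 8) ?_ ?_ ?_ ?_
  · exact Eventually.of_forall fun n => (continuous_corr r B φ n _).aestronglyMeasurable
  · exact Eventually.of_forall fun n => Eventually.of_forall fun t _ =>
      norm_corr_le hr0 hr1 hB hφ n _ t
  · exact intervalIntegrable_const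
  · exact Eventually.of_forall fun t _ => tendsto_corr hr0 hr1 hB hφ ξ t

/-- The walk preserves total probability. -/
lemma sum_qwP {r : ℝ} (hr0 : 0 < r) (hr1 : r < 1) {B : ℂ} (hB : r ^ 2 + ‖B‖ ^ 2 = 1)
    {φ : ℂ × ℂ} (hφ : nsq φ = 1) (n : ℕ) :
    ∑ y ∈ Finset.Icc (-(n : ℤ)) n, qwP r B φ n y = 1 := by
  have h := integral_corr r B φ n 0
  have h1 : ∀ t, corr r B φ n 0 t = 1 := fun t => by
    rw [corr_eq hr0 hr1 hB hφ]; simp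
  simp_rw [h1] at h
  have hpi : (Real.pi : ℂ) ≠ 0 := by exact_mod_cast Real.pi_ne_zero
  simp at h
  have h2 : (2 * Real.pi : ℂ) * ((∑ y ∈ Finset.Icc (-(n : ℤ)) n, qwP r B φ n y : ℝ) : ℂ) =
      2 * Real.pi * 1 := by
    push_cast
    rw [← h]; ring
  have := mul_left_cancel₀ (mul_ne_zero two_ne_zero hpi) h2
  exact_mod_cast this

lemma om_neg (r t : ℝ) : om r (-t) = om r t := by simp [om]

lemma vel_neg (r t : ℝ) : vel r (-t) = -vel r t := by simp [vel, om_neg, neg_div]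

lemma vel_add_pi (r t : ℝ) : vel r (t + Real.pi) = -vel r t := by
  simp [vel, om, neg_div]

lemma integral_odd {f : ℝ → ℂ} (hf : ∀ t, f (-t) = -f t) (c : ℝ) :
    ∫ t in (-c)..c, f t = 0 := by
  have h := intervalIntegral.integral_comp_neg (a := -c) (b := c) f
  simp_rw [hf] at h
  rw [intervalIntegral.integral_neg, neg_neg] at h
  exact self_eq_neg.1 h.symm

/-- Folding the limit of the characteristic functions onto `[-π/2, π/2]`, where the velocity is
monotone: the part of `⟨φ, H(t) φ⟩` that is even in `t` drops out, the odd part is `λ_A(φ) v(t)`,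
and the remaining integrand has period `π` because `v(t + π) = -v(t)`. -/
lemma integral_limit {r : ℝ} (hr0 : 0 < r) (hr1 : r < 1) (B : ℂ) (φ : ℂ × ℂ) (ξ : ℝ) :
    ∫ t in (-Real.pi)..Real.pi,
        (Real.cos (ξ * vel r t) + Complex.I * hF r B φ t * Real.sin (ξ * vel r t)) =
      2 * ∫ t in (-(Real.pi / 2))..(Real.pi / 2),
        ((1 + lamA r B φ * vel r t : ℝ) : ℂ) * Complex.exp (ξ * vel r t * Complex.I) := by
  have hv := continuous_vel hr0 hr1
  have ho : Continuous fun t => Real.cos t / om r t :=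
    Real.continuous_cos.div (continuous_om r) fun t => (om_pos hr0 hr1 t).ne'
  set L := lamA r B φ with hL
  set κ : ℝ := 2 * ((starRingEnd ℂ) φ.1 * φ.2 * B).im with hκ
  set G : ℝ → ℂ := fun t => Real.cos (ξ * vel r t) + Complex.I * (L * vel r t : ℝ) *
    Real.sin (ξ * vel r t) with hG
  have hGc : Continuous G := by simp only [hG]; fun_prop
  have s1 : ∫ t in (-Real.pi)..Real.pi,
        (Real.cos (ξ * vel r t) + Complex.I * hF r B φ t * Real.sin (ξ * vel r t)) =
      ∫ t in (-Real.pi)..Real.pi, G t := by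
    have hodd : ∫ t in (-Real.pi)..Real.pi, Complex.I * (κ * (Real.cos t / om r t) : ℝ) *
        (Real.sin (ξ * vel r t) : ℂ) = 0 := by
      apply integral_odd
      intro t
      rw [vel_neg, om_neg, Real.cos_neg, mul_neg, Real.sin_neg]
      push_cast; ring
    have hoc : Continuous fun t => Complex.I * (κ * (Real.cos t / om r t) : ℝ) *
        (Real.sin (ξ * vel r t) : ℂ) := by fun_prop
    rw [← add_zero (∫ t in (-Real.pi)..Real.pi, G t), ← hodd,
      ← intervalIntegral.integral_add (hGc.intervalIntegrable _ _) (hoc.intervalIntegrable _ _)]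
    refine intervalIntegral.integral_congr fun t _ => ?_
    simp only [hG, hF]
    rw [← hL, ← hκ]
    push_cast; ring
  have s2 : ∫ t in (-Real.pi)..Real.pi, G t =
      2 * ∫ t in (-(Real.pi / 2))..(Real.pi / 2), G t := by
    have hper : Function.Periodic G Real.pi := by
      intro t
      simp only [hG]
      rw [vel_add_pi, mul_neg, mul_neg, Real.cos_neg, Real.sin_neg]
      push_cast; ring
    have a1 := hper.intervalIntegral_add_eq (-Real.pi) (-(Real.pi / 2))
    have a2 := hper.intervalIntegral_add_eq 0 (-(Real.pi / 2))
    have e1 : -Real.pi + Real.pi = 0 := by ring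
    have e2 : -(Real.pi / 2) + Real.pi = Real.pi / 2 := by ring
    rw [e1, e2] at a1
    rw [zero_add, e2] at a2
    rw [← intervalIntegral.integral_add_adjacent_intervals (hGc.intervalIntegrable (-Real.pi) 0)
      (hGc.intervalIntegrable 0 Real.pi), a1, a2]
    ring
  rw [s1, s2]
  congr 1
  have hodd : ∫ t in (-(Real.pi / 2))..(Real.pi / 2), (Complex.I * Real.sin (ξ * vel r t) +
      (L * vel r t : ℝ) * (Real.cos (ξ * vel r t) : ℂ)) = 0 := by
    apply integral_odd
    intro t
    rw [vel_neg, mul_neg, mul_neg, Real.cos_neg, Real.sin_neg]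
    push_cast; ring
  have hoc : Continuous fun t => (Complex.I * Real.sin (ξ * vel r t) +
      (L * vel r t : ℝ) * (Real.cos (ξ * vel r t) : ℂ)) := by fun_prop
  rw [← add_zero (∫ t in (-(Real.pi / 2))..(Real.pi / 2), G t), ← hodd,
      ← intervalIntegral.integral_add (hGc.intervalIntegrable _ _) (hoc.intervalIntegrable _ _)]
  refine intervalIntegral.integral_congr fun t _ => ?_
  simp only [hG]
  rw [Complex.exp_mul_I]
  push_cast; ring

/-! ### The velocity as a change of variables -/

lemma vel_sq {r : ℝ} (hr0 : 0 < r) (hr1 : r < 1) (t : ℝ) :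
    r ^ 2 - vel r t ^ 2 = (1 - r ^ 2) * (r * Real.cos t) ^ 2 / om r t ^ 2 := by
  have h := om_pos hr0 hr1 t
  have h2 := om_sq hr0 hr1 t
  have h3 := Real.sin_sq_add_cos_sq t
  rw [vel, div_pow, eq_div_iff (by positivity), sub_mul, div_mul_cancel₀ _ (by positivity), h2]
  linear_combination -r ^ 2 * h3

lemma abs_vel_le {r : ℝ} (hr0 : 0 < r) (hr1 : r < 1) (t : ℝ) : |vel r t| ≤ r := by
  have h := vel_sq hr0 hr1 t
  have : 0 ≤ (1 - r ^ 2) * (r * Real.cos t) ^ 2 / om r t ^ 2 := by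
    have : 0 ≤ 1 - r ^ 2 := by nlinarith
    positivity
  exact abs_le_of_sq_le_sq (by linarith) hr0.le

/-- Together with `|v| ≤ r` this makes the density `1 + λ_A(φ) v` of the limit law nonnegative. -/
lemma abs_lam_le {r : ℝ} (hr0 : 0 < r) {B : ℂ} (hB : r ^ 2 + ‖B‖ ^ 2 = 1)
    {φ : ℂ × ℂ} (hφ : nsq φ = 1) : |r * lamA r B φ| ≤ 1 := by
  have e : r * lamA r B φ = r * (‖φ.2‖ ^ 2 - ‖φ.1‖ ^ 2) +
      2 * ((starRingEnd ℂ) φ.1 * φ.2 * B).re := by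
    rw [lamA_real hr0]; field_simp
  have hz : |((starRingEnd ℂ) φ.1 * φ.2 * B).re| ≤ ‖φ.1‖ * ‖φ.2‖ * ‖B‖ := by
    refine (Complex.abs_re_le_norm _).trans ?_
    simp
  unfold nsq at hφ
  set p := ‖φ.1‖
  set q := ‖φ.2‖
  set s := ‖B‖
  -- Cauchy–Schwarz for `(r, s)` and `(q² - p², 2pq)`, both of norm one
  have cs : (r * |q ^ 2 - p ^ 2| + 2 * (p * q * s)) ^ 2 ≤ 1 ^ 2 := by
    have h1 : |q ^ 2 - p ^ 2| ^ 2 + (2 * (p * q)) ^ 2 = 1 := by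
      rw [sq_abs]; linear_combination (p ^ 2 + q ^ 2 + 1) * hφ
    nlinarith [sq_nonneg (s * |q ^ 2 - p ^ 2| - r * (2 * (p * q)))]
  have := abs_le_of_sq_le_sq cs zero_le_one
  have h2 := (abs_le.1 this).2
  rw [e]
  refine (abs_add_le _ _).trans ?_
  rw [abs_mul, abs_mul, abs_of_pos hr0, abs_two]
  linarith

lemma dens_nonneg {r : ℝ} (hr0 : 0 < r) (hr1 : r < 1) {B : ℂ} (hB : r ^ 2 + ‖B‖ ^ 2 = 1)
    {φ : ℂ × ℂ} (hφ : nsq φ = 1) (t : ℝ) : 0 ≤ (1 + lamA r B φ * vel r t) / Real.pi := by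
  have h1 := abs_lam_le hr0 hB hφ
  have h2 := abs_vel_le hr0 hr1 t
  rw [abs_mul, abs_of_pos hr0] at h1
  have h3 : |lamA r B φ * vel r t| ≤ 1 := by
    rw [abs_mul]
    nlinarith [abs_nonneg (lamA r B φ), abs_nonneg (vel r t)]
  have := (abs_le.1 h3).1
  apply div_nonneg _ Real.pi_pos.le
  linarith

lemma hasDerivAt_vel {r : ℝ} (hr0 : 0 < r) (hr1 : r < 1) (t : ℝ) :
    HasDerivAt (vel r) (r * Real.cos t * (1 - r ^ 2) / om r t ^ 3) t := by
  have h := om_pos hr0 hr1 t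
  have h2 := om_sq hr0 hr1 t
  have h3 := Real.sin_sq_add_cos_sq t
  have ho : HasDerivAt (om r) (r ^ 2 * Real.cos t * Real.sin t / om r t) t := by
    have i : HasDerivAt (fun t => 1 - (r * Real.cos t) ^ 2)
        (2 * r ^ 2 * Real.cos t * Real.sin t) t := by
      have := ((((Real.hasDerivAt_cos t).const_mul r).pow 2).const_sub 1)
      exact this.congr_deriv (by simp; ring)
    have := i.sqrt (by nlinarith)
    exact this.congr_deriv (by unfold om; field_simp)
  have := ((Real.hasDerivAt_sin t).const_mul r).div ho h.ne'
  refine this.congr_deriv ?_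
  field_simp
  rw [h2]
  linear_combination -r ^ 2 * Real.cos t * h3

lemma strictMonoOn_vel {r : ℝ} (hr0 : 0 < r) (hr1 : r < 1) :
    StrictMonoOn (vel r) (Set.Icc (-(Real.pi / 2)) (Real.pi / 2)) := by
  refine strictMonoOn_of_deriv_pos (convex_Icc _ _) (continuous_vel hr0 hr1).continuousOn ?_
  intro t ht
  rw [interior_Icc] at ht
  rw [(hasDerivAt_vel hr0 hr1 t).deriv]
  have h := om_pos hr0 hr1 t
  have hc := Real.cos_pos_of_mem_Ioo ht
  have : 0 < 1 - r ^ 2 := by nlinarith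
  positivity

lemma exists_vel_eq {r : ℝ} (hr0 : 0 < r) (hr1 : r < 1) {α : ℝ} (h1 : -r < α) (h2 : α < r) :
    ∃ k ∈ Set.Ioo (-(Real.pi / 2)) (Real.pi / 2), vel r k = α := by
  have hle : -(Real.pi / 2) ≤ Real.pi / 2 := by linarith [Real.pi_pos]
  have := intermediate_value_Ioo hle (continuous_vel hr0 hr1).continuousOn
  have hm : α ∈ Set.Ioo (vel r (-(Real.pi / 2))) (vel r (Real.pi / 2)) := by
    simp [vel, om, h1, h2]
  obtain ⟨k, hk, e⟩ := this hm
  exact ⟨k, hk, e⟩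

/-- The change of variables `ξ = v(t)`. -/
lemma integral_vel {r : ℝ} (hr0 : 0 < r) (hr1 : r < 1) {B : ℂ} (hB : r ^ 2 + ‖B‖ ^ 2 = 1)
    (L : ℝ) {k l : ℝ} (hk : -(Real.pi / 2) < k) (hkl : k ≤ l) (hl : l < Real.pi / 2) :
    ∫ t in k..l, (1 + L * vel r t) / Real.pi =
      ∫ ξ in (vel r k)..(vel r l),
        ‖B‖ * (1 + L * ξ) / (Real.pi * (1 - ξ ^ 2) * √(r ^ 2 - ξ ^ 2)) := by
  have hs : 0 < ‖B‖ := by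
    rcases (norm_nonneg B).eq_or_lt with h | h
    · rw [← h] at hB; nlinarith
    · exact h
  have hs2 : 1 - r ^ 2 = ‖B‖ ^ 2 := by linarith
  have hsub : ∀ t ∈ Set.uIcc k l, 0 < Real.cos t := by
    intro t ht
    rw [Set.uIcc_of_le hkl] at ht
    exact Real.cos_pos_of_mem_Ioo ⟨hk.trans_le ht.1, ht.2.trans_lt hl⟩
  have hlt : ∀ t ∈ Set.uIcc k l, 0 < r ^ 2 - vel r t ^ 2 := by
    intro t ht
    have := hsub t ht
    have := om_pos hr0 hr1 t
    rw [vel_sq hr0 hr1, hs2]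
    positivity
  rw [← intervalIntegral.integral_comp_mul_deriv' (fun t _ => hasDerivAt_vel hr0 hr1 t)]
  · refine intervalIntegral.integral_congr fun t ht => ?_
    have hc := hsub t ht
    have hw := om_pos hr0 hr1 t
    have hsq : √(r ^ 2 - vel r t ^ 2) = ‖B‖ * (r * Real.cos t) / om r t := by
      rw [vel_sq hr0 hr1, hs2, ← mul_pow, ← div_pow, Real.sqrt_sq (by positivity)]
    have h1 : 1 - vel r t ^ 2 = ‖B‖ ^ 2 / om r t ^ 2 := by
      have := vel_sq hr0 hr1 t
      have h2 := om_sq hr0 hr1 t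
      rw [eq_div_iff (by positivity)]
      field_simp at this
      linear_combination this + (1 - r ^ 2) * h2 + hs2
    simp only [Function.comp_apply]
    rw [hsq, h1, hs2]
    field_simp
  · refine Continuous.continuousOn (Continuous.div (by fun_prop) ((continuous_om r).pow 3) ?_)
    intro t
    exact pow_ne_zero _ (om_pos hr0 hr1 t).ne'
  · refine ContinuousOn.div (by fun_prop) (by fun_prop) ?_
    rintro _ ⟨t, ht, rfl⟩
    have h1 := hlt t ht
    have h2 : 0 < 1 - vel r t ^ 2 := by nlinarith
    have h3 := Real.sqrt_pos.2 h1
    have := Real.pi_pos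
    positivity

/-! ### Weak convergence and conclusion -/

/-- The limit law: the image under the velocity of the measure `π⁻¹ (1 + L v(t)) dt` on
`(-π/2, π/2]`. -/
def limM (r L : ℝ) : Measure ℝ :=
  ((volume.restrict (Set.Ioc (-(Real.pi / 2)) (Real.pi / 2))).withDensity
    (fun t => ENNReal.ofReal ((1 + L * vel r t) / Real.pi))).map (vel r)

/-- The law of `X_n / n`, where `X_n` is the position of the walker at time `n`. -/
def walkM (r : ℝ) (B : ℂ) (φ : ℂ × ℂ) (n : ℕ) : Measure ℝ :=
  ∑ y ∈ Finset.Icc (-(n : ℤ)) n, ENNReal.ofReal (qwP r B φ n y) • Measure.dirac ((y : ℝ) / n)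

lemma qwP_nonneg (a b : ℂ) (φ : ℂ × ℂ) (n : ℕ) (y : ℤ) : 0 ≤ qwP a b φ n y := by
  unfold qwP nsq; positivity

lemma continuous_dens {r : ℝ} (hr0 : 0 < r) (hr1 : r < 1) (L : ℝ) :
    Continuous fun t => (1 + L * vel r t) / Real.pi := by
  have := continuous_vel hr0 hr1
  fun_prop

lemma limM_apply {r L : ℝ} (hr0 : 0 < r) (hr1 : r < 1)
    (hL : ∀ t, 0 ≤ (1 + L * vel r t) / Real.pi) {S : Set ℝ} (hS : MeasurableSet S) :
    limM r L S = ENNReal.ofReal (∫ t in vel r ⁻¹' S ∩ Set.Ioc (-(Real.pi / 2)) (Real.pi / 2),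
      (1 + L * vel r t) / Real.pi) := by
  have hv := (continuous_vel hr0 hr1).measurable
  rw [limM, Measure.map_apply hv hS, withDensity_apply _ (hv hS), Measure.restrict_restrict (hv hS),
    ofReal_integral_eq_lintegral_ofReal]
  · refine IntegrableOn.mono_set ?_ Set.inter_subset_right
    exact (continuous_dens hr0 hr1 L).integrableOn_Ioc
  · exact Eventually.of_forall hL

lemma limM_isProb {r L : ℝ} (hr0 : 0 < r) (hr1 : r < 1)
    (hL : ∀ t, 0 ≤ (1 + L * vel r t) / Real.pi) : IsProbabilityMeasure (limM r L) := by
  constructor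
  have hpi := Real.pi_pos
  have hv := continuous_vel hr0 hr1
  rw [limM_apply hr0 hr1 hL MeasurableSet.univ, Set.preimage_univ, Set.univ_inter,
    ← intervalIntegral.integral_of_le (by linarith), intervalIntegral.integral_div,
    intervalIntegral.integral_add intervalIntegrable_const
      ((by fun_prop : Continuous fun t => L * vel r t).intervalIntegrable _ _)]
  have h : ∫ t in (-(Real.pi / 2))..(Real.pi / 2), L * vel r t = 0 := by
    have := integral_odd (f := fun t => ((L * vel r t : ℝ) : ℂ))
      (fun t => by rw [vel_neg]; push_cast; ring) (Real.pi / 2)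
    rw [intervalIntegral.integral_ofReal] at this
    exact_mod_cast this
  rw [h]
  simp

lemma limM_singleton {r L : ℝ} (hr0 : 0 < r) (hr1 : r < 1)
    (hL : ∀ t, 0 ≤ (1 + L * vel r t) / Real.pi) (x : ℝ) : limM r L {x} = 0 := by
  rw [limM_apply hr0 hr1 hL (measurableSet_singleton x), setIntegral_measure_zero,
    ENNReal.ofReal_zero]
  refine Set.Subsingleton.measure_zero ?_ _
  rintro s ⟨hs, hs'⟩ t ⟨ht, ht'⟩
  exact (strictMonoOn_vel hr0 hr1).injOn (Set.Ioc_subset_Icc_self hs')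
    (Set.Ioc_subset_Icc_self ht') (by rw [Set.mem_preimage, Set.mem_singleton_iff] at hs ht; rw [hs, ht])

lemma limM_Icc {r : ℝ} (hr0 : 0 < r) (hr1 : r < 1) {B : ℂ} (hB : r ^ 2 + ‖B‖ ^ 2 = 1) {L : ℝ}
    (hL : ∀ t, 0 ≤ (1 + L * vel r t) / Real.pi) {α β : ℝ}
    (hα : -r < α) (hαβ : α < β) (hβ : β < r) :
    (limM r L (Set.Icc α β)).toReal = ∫ ξ in α..β,
        ‖B‖ * (1 + L * ξ) / (Real.pi * (1 - ξ ^ 2) * √(r ^ 2 - ξ ^ 2)) := by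
  obtain ⟨k, hk, rfl⟩ := exists_vel_eq hr0 hr1 hα (hαβ.trans hβ)
  obtain ⟨l, hl, rfl⟩ := exists_vel_eq hr0 hr1 (hα.trans hαβ) hβ
  have hm := strictMonoOn_vel hr0 hr1
  have hk' := Set.Ioo_subset_Icc_self hk
  have hl' := Set.Ioo_subset_Icc_self hl
  have hkl : k < l := (hm.lt_iff_lt hk' hl').1 hαβ
  have hset : vel r ⁻¹' Set.Icc (vel r k) (vel r l) ∩ Set.Ioc (-(Real.pi / 2)) (Real.pi / 2) =
      Set.Icc k l := by
    ext t
    constructor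
    · rintro ⟨h1, h2⟩
      have h2' := Set.Ioc_subset_Icc_self h2
      exact ⟨(hm.le_iff_le hk' h2').1 h1.1, (hm.le_iff_le h2' hl').1 h1.2⟩
    · rintro ⟨h1, h2⟩
      have h : t ∈ Set.Ioc (-(Real.pi / 2)) (Real.pi / 2) :=
        ⟨hk.1.trans_le h1, h2.trans hl.2.le⟩
      have h' := Set.Ioc_subset_Icc_self h
      exact ⟨⟨(hm.le_iff_le hk' h').2 h1, (hm.le_iff_le h' hl').2 h2⟩, h⟩
  rw [limM_apply hr0 hr1 hL measurableSet_Icc, hset, integral_Icc_eq_integral_Ioc,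
    ENNReal.toReal_ofReal (integral_nonneg hL), ← intervalIntegral.integral_of_le hkl.le,
    integral_vel hr0 hr1 hB L hk.1 hkl.le hl.2]

lemma charFun_limM {r L : ℝ} (hr0 : 0 < r) (hr1 : r < 1)
    (hL : ∀ t, 0 ≤ (1 + L * vel r t) / Real.pi) (ξ : ℝ) :
    charFun (limM r L) ξ = (Real.pi : ℂ)⁻¹ * ∫ t in (-(Real.pi / 2))..(Real.pi / 2),
        ((1 + L * vel r t : ℝ) : ℂ) * Complex.exp (ξ * vel r t * Complex.I) := by
  have hv := continuous_vel hr0 hr1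
  have hd := continuous_dens hr0 hr1 L
  rw [charFun_apply_real, limM, integral_map hv.aemeasurable
    (Continuous.aestronglyMeasurable (by fun_prop)),
    integral_withDensity_eq_integral_toReal_smul hd.measurable.ennreal_ofReal
      (Eventually.of_forall fun t => ENNReal.ofReal_lt_top),
    intervalIntegral.integral_of_le (by linarith [Real.pi_pos]), ← integral_const_mul]
  refine integral_congr_ae (Eventually.of_forall fun t => ?_)
  simp only
  rw [ENNReal.toReal_ofReal (hL t), Complex.real_smul]
  push_cast
  ring

lemma walkM_isProb {r : ℝ} (hr0 : 0 < r) (hr1 : r < 1) {B : ℂ} (hB : r ^ 2 + ‖B‖ ^ 2 = 1)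
    {φ : ℂ × ℂ} (hφ : nsq φ = 1) (n : ℕ) : IsProbabilityMeasure (walkM r B φ n) := by
  constructor
  simp only [walkM, Measure.finsetSum_apply, Measure.smul_apply, measure_univ, smul_eq_mul, mul_one]
  rw [← ENNReal.ofReal_sum_of_nonneg (fun y _ => qwP_nonneg _ _ _ _ _), sum_qwP hr0 hr1 hB hφ,
    ENNReal.ofReal_one]

lemma charFun_walkM (r : ℝ) (B : ℂ) (φ : ℂ × ℂ) (n : ℕ) (ξ : ℝ) :
    charFun (walkM r B φ n) ξ = ∑ y ∈ Finset.Icc (-(n : ℤ)) n,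
        (qwP r B φ n y : ℂ) * Complex.exp ((ξ / n : ℝ) * y * Complex.I) := by
  rw [charFun_apply_real, walkM, integral_finsetSum_measure]
  · refine Finset.sum_congr rfl fun y _ => ?_
    rw [integral_smul_measure, integral_dirac, ENNReal.toReal_ofReal (qwP_nonneg _ _ _ _ _),
      Complex.real_smul]
    congr 2
    push_cast
    ring
  · intro y _
    exact (integrable_dirac (by simp)).smul_measure ENNReal.ofReal_ne_top

lemma walkM_Icc (r : ℝ) (B : ℂ) (φ : ℂ × ℂ) {n : ℕ} (hn : 0 < n) {α β : ℝ}
    (hα : -1 ≤ α) (hβ : β ≤ 1) :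
    (walkM r B φ n (Set.Icc α β)).toReal =
      ∑ y ∈ Finset.Icc ⌈(n : ℝ) * α⌉ ⌊(n : ℝ) * β⌋, qwP r B φ n y := by
  have hn' : (0 : ℝ) < n := by exact_mod_cast hn
  have hsub : Finset.Icc ⌈(n : ℝ) * α⌉ ⌊(n : ℝ) * β⌋ =
      (Finset.Icc (-(n : ℤ)) n).filter (fun y : ℤ => (y : ℝ) / n ∈ Set.Icc α β) := by
    ext y
    simp only [Finset.mem_filter, Finset.mem_Icc, Set.mem_Icc, Int.ceil_le, Int.le_floor,
      le_div_iff₀ hn', div_le_iff₀ hn', mul_comm (n : ℝ)]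
    refine ⟨fun h => ⟨⟨?_, ?_⟩, h⟩, fun h => h.2⟩
    · have : (-(n : ℝ)) ≤ y := by nlinarith
      exact_mod_cast this
    · have : (y : ℝ) ≤ n := by nlinarith
      exact_mod_cast this
  rw [hsub, Finset.sum_filter, walkM, Measure.finsetSum_apply, ENNReal.toReal_sum]
  · refine Finset.sum_congr rfl fun y _ => ?_
    rw [Measure.smul_apply, Measure.dirac_apply' _ measurableSet_Icc, smul_eq_mul,
      ENNReal.toReal_mul, ENNReal.toReal_ofReal (qwP_nonneg _ _ _ _ _), Set.indicator_apply]
    split_ifs <;> simp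
  · intro y _
    rw [Measure.smul_apply, smul_eq_mul]
    exact ENNReal.mul_ne_top ENNReal.ofReal_ne_top (measure_ne_top _ _)

lemma tendsto_charFun_walkM {r : ℝ} (hr0 : 0 < r) (hr1 : r < 1) {B : ℂ}
    (hB : r ^ 2 + ‖B‖ ^ 2 = 1) {φ : ℂ × ℂ} (hφ : nsq φ = 1) (ξ : ℝ) :
    Tendsto (fun n => charFun (walkM r B φ n) ξ) atTop
      (𝓝 (charFun (limM r (lamA r B φ)) ξ)) := by
  have hpi : (Real.pi : ℂ) ≠ 0 := by exact_mod_cast Real.pi_ne_zero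
  have h := (tendsto_integral_corr hr0 hr1 hB hφ ξ).const_mul (2 * (Real.pi : ℂ))⁻¹
  rw [integral_limit hr0 hr1] at h
  rw [charFun_limM hr0 hr1 (dens_nonneg hr0 hr1 hB hφ)]
  convert h using 1
  · funext n
    rw [integral_corr, charFun_walkM, inv_mul_cancel_left₀ (mul_ne_zero two_ne_zero hpi)]
  · congr 1
    rw [← mul_assoc]
    congr 1
    field_simp

/-- The theorem for a coin with real positive first entry. -/
lemma tendsto_real {r : ℝ} (hr0 : 0 < r) (hr1 : r < 1) {B : ℂ}
    (hB : r ^ 2 + ‖B‖ ^ 2 = 1) {φ : ℂ × ℂ} (hφ : nsq φ = 1) {α β : ℝ}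
    (hα : -r < α) (hαβ : α < β) (hβ : β < r) :
    Tendsto
      (fun n : ℕ => ∑ y ∈ Finset.Icc ⌈(n : ℝ) * α⌉ ⌊(n : ℝ) * β⌋, qwP r B φ n y)
      atTop
      (𝓝 (∫ ξ in α..β,
        ‖B‖ * (1 + lamA r B φ * ξ) / (Real.pi * (1 - ξ ^ 2) * √(r ^ 2 - ξ ^ 2)))) := by
  have hL := dens_nonneg hr0 hr1 hB hφ
  let μ : ℕ → ProbabilityMeasure ℝ := fun n => ⟨walkM r B φ n, walkM_isProb hr0 hr1 hB hφ n⟩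
  let ν : ProbabilityMeasure ℝ := ⟨limM r (lamA r B φ), limM_isProb hr0 hr1 hL⟩
  have hw : Tendsto μ atTop (𝓝 ν) :=
    ProbabilityMeasure.tendsto_of_tendsto_charFun fun ξ => tendsto_charFun_walkM hr0 hr1 hB hφ ξ
  have hfr : (ν : Measure ℝ) (frontier (Set.Icc α β)) = 0 := by
    rw [frontier_Icc hαβ.le]
    change limM r (lamA r B φ) {α, β} = 0
    rw [Set.insert_eq]
    exact measure_union_null (limM_singleton hr0 hr1 hL α) (limM_singleton hr0 hr1 hL β)
  have h := ProbabilityMeasure.tendsto_measure_of_null_frontier_of_tendsto' hw hfr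
  have h2 := (ENNReal.tendsto_toReal (measure_ne_top _ _)).comp h
  rw [← limM_Icc hr0 hr1 hB hL hα hαβ hβ]
  refine h2.congr' ?_
  filter_upwards [eventually_gt_atTop 0] with n hn
  exact walkM_Icc r B φ hn (by linarith) (by linarith)

/-- Corollary of Konno's theorem: the probability of finding the walk in
`[nα, nβ] ⊂ (−|a|n, |a|n)` converges to `∫_α^β ρ(ξ) dξ` with
`ρ(ξ) = |b|(1 + λ_A(φ)ξ)/(π(1 − ξ²)√(|a|² − ξ²))`. -/
theorem stmt1 (a b : ℂ) (hab1 : ‖a‖ ^ 2 + ‖b‖ ^ 2 = 1) (hab : a * b ≠ 0)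
    (φ : ℂ × ℂ) (hφ : nsq φ = 1) (α β : ℝ)
    (hα : -‖a‖ < α) (hαβ : α < β) (hβ : β < ‖a‖) :
    Tendsto
      (fun n : ℕ => ∑ y ∈ Finset.Icc ⌈(n : ℝ) * α⌉ ⌊(n : ℝ) * β⌋, qwP a b φ n y)
      atTop
      (𝓝 (∫ ξ in α..β,
        ‖b‖ * (1 + lamA a b φ * ξ) / (Real.pi * (1 - ξ ^ 2) * Real.sqrt (‖a‖ ^ 2 - ξ ^ 2)))) := by
  have ha : a ≠ 0 := left_ne_zero_of_mul hab
  have hb : b ≠ 0 := right_ne_zero_of_mul hab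
  have ha' : 0 < ‖a‖ := norm_pos_iff.2 ha
  have hb' : 0 < ‖b‖ := norm_pos_iff.2 hb
  have hBn : ‖b * (a / ‖a‖)‖ = ‖b‖ := by simp [ha]
  have h := tendsto_real (B := b * (a / ‖a‖)) ha' (by nlinarith) (by rw [hBn]; exact hab1) hφ hα hαβ hβ
  rw [hBn, ← lamA_gauge a b ha φ] at h
  simp_rw [qwP_gauge a b ha φ]
  exact h
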